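/- arXiv:2303.07664 — 2 statements merged into one kernel-verified Lean document; each statement's English description precedes it below -/
import Mathlib

section
/- The generalized hypergeometric series ₃F₂(1/2, 1/2, 1/2; 3/2, 3/2; -1/4) equals π²/10. Concretely, the sum over n ≥ 0 of ((1/2)ₙ)³ / (((3/2)ₙ)² · n!) · (-1/4)ⁿ equals π²/10. -/
open Real

/-- The Pochhammer symbol (shifted factorial) `(a)ₙ` for a real number `a`. -/
noncomputable def poch (a : ℝ) (n : ℕ) : ℝ := Polynomial.eval a (ascPochhammer ℝ n)

open Filter Topology in
lemma const_of_deriv_zero {f : ℝ → ℝ} {b c : ℝ}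
    (hd : ∀ x ∈ Set.Ioo 0 b, HasDerivAt f 0 x) (hl : Tendsto f (𝓝[>] 0) (𝓝 c)) :
    ∀ x ∈ Set.Ioo 0 b, f x = c := by
  intro x hx
  have h1 : ∀ y ∈ Set.Ioo 0 b, f y = f x := by
    intro y hy
    exact isOpen_Ioo.is_const_of_deriv_eq_zero isPreconnected_Ioo
      (fun z hz => (hd z hz).differentiableAt.differentiableWithinAt)
      (fun z hz => (hd z hz).deriv) hy hx
  have h2 : f =ᶠ[𝓝[>] 0] fun _ => f x := by
    filter_upwards [Ioo_mem_nhdsGT (hx.1.trans hx.2)] with y hy using h1 y hy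
  exact tendsto_nhds_unique (tendsto_const_nhds.congr' h2.symm) hl

/-- Integrated power series. -/
noncomputable def intSer (c : ℕ → ℝ) (k : ℕ → ℕ) (x : ℝ) : ℝ :=
  ∑' n : ℕ, c n * x ^ (k n + 1) / ((k n : ℝ) + 1)

lemma intSer_zero (c : ℕ → ℝ) (k : ℕ → ℕ) : intSer c k 0 = 0 := by
  simp [intSer]

lemma intSer_deriv (c : ℕ → ℝ) (k : ℕ → ℕ) (hc : ∀ n, |c n| ≤ 1) (hk : ∀ n, n ≤ k n)
    {x : ℝ} (hx : |x| < 1) :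
    HasDerivAt (intSer c k) (∑' n : ℕ, c n * x ^ (k n)) x := by
  obtain ⟨r, hr1, hr2⟩ := exists_between hx
  have hr0 : 0 < r := (abs_nonneg x).trans_lt hr1
  unfold intSer
  refine hasDerivAt_tsum_of_isPreconnected (F := ℝ)
    (g := fun n z => c n * z ^ (k n + 1) / ((k n : ℝ) + 1))
    (g' := fun n z => c n * z ^ (k n)) (u := fun n => r ^ n) (t := Set.Ioo (-r) r) (y₀ := 0)
    (summable_geometric_of_lt_one hr0.le hr2) isOpen_Ioo isPreconnected_Ioo ?_ ?_ ?_ ?_ ?_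
  · intro n y _
    have h := ((hasDerivAt_pow (k n + 1) y).const_mul (c n)).div_const ((k n : ℝ) + 1)
    refine h.congr_deriv ?_
    have : (k n : ℝ) + 1 ≠ 0 := by positivity
    push_cast
    field_simp
  · intro n y hy
    have hy' : |y| ≤ r := abs_le.2 ⟨hy.1.le, hy.2.le⟩
    rw [Real.norm_eq_abs, abs_mul, abs_pow]
    calc |c n| * |y| ^ k n ≤ 1 * r ^ (k n) := by
          gcongr
          exact hc n
      _ = r ^ k n := one_mul _
      _ ≤ r ^ n := pow_le_pow_of_le_one hr0.le hr2.le (hk n)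
  · exact ⟨by linarith, hr0⟩
  · simp
  · exact abs_lt.1 hr1

/-- The dilogarithm. -/
noncomputable def dilog : ℝ → ℝ := intSer (fun n => 1 / ((n : ℝ) + 1)) (fun n => n)

lemma dilog_zero : dilog 0 = 0 := intSer_zero _ _

lemma dilog_deriv {x : ℝ} (hx : |x| < 1) (h0 : x ≠ 0) :
    HasDerivAt dilog (- Real.log (1 - x) / x) x := by
  have h := intSer_deriv (fun n => 1 / ((n : ℝ) + 1)) (fun n => n) (fun n => by
    rw [abs_of_nonneg (by positivity)]
    rw [div_le_one (by positivity)]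
    have : (0 : ℝ) ≤ n := by positivity
    linarith) (fun n => le_rfl) hx
  refine HasDerivAt.congr_deriv h ?_
  rw [← (Real.hasSum_pow_div_log_of_abs_lt_one hx).tsum_eq, ← tsum_div_const]
  congr 1
  ext n
  field_simp
  ring

lemma dilog_deriv_zero : HasDerivAt dilog (∑' n : ℕ, 1 / ((n : ℝ) + 1) * 0 ^ n) 0 :=
  intSer_deriv (fun n => 1 / ((n : ℝ) + 1)) (fun n => n) (fun n => by
    rw [abs_of_nonneg (by positivity)]
    rw [div_le_one (by positivity)]
    have : (0 : ℝ) ≤ n := by positivity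
    linarith) (fun n => le_rfl) (by simp)

lemma dilog_one : dilog 1 = π ^ 2 / 6 := by
  have h := (hasSum_nat_add_iff' 1).2 hasSum_zeta_two
  simp only [Finset.range_one, Finset.sum_singleton] at h
  have h2 := h.tsum_eq
  simp only [dilog, intSer]
  norm_num at h2
  rw [← h2]
  congr 1
  ext n
  rw [one_pow]
  field_simp

open Filter Topology in
lemma dilog_tendsto_one : Tendsto dilog (𝓝[<] 1) (𝓝 (π ^ 2 / 6)) := by
  have hcont : ContinuousOn dilog (Set.Icc 0 1) := by
    refine continuousOn_tsum (u := fun n : ℕ => 1 / ((n : ℝ) + 1) ^ 2) ?_ ?_ ?_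
    · intro n
      fun_prop
    · have := (summable_nat_add_iff 1).2 hasSum_zeta_two.summable
      simpa using this
    · intro n x hx
      have h1 : x ^ (n + 1) ≤ 1 := pow_le_one₀ hx.1 hx.2
      have h0 : 0 ≤ x ^ (n + 1) := pow_nonneg hx.1 _
      rw [Real.norm_eq_abs, abs_of_nonneg (by positivity)]
      have : 1 / ((n : ℝ) + 1) * x ^ (n + 1) / ((n : ℝ) + 1)
        = x ^ (n + 1) / ((n : ℝ) + 1) ^ 2 := by field_simp
      rw [this]
      gcongr
  have h := hcont 1 (by simp)
  unfold ContinuousWithinAt at h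
  rw [dilog_one] at h
  refine h.mono_left ?_
  rw [← nhdsWithin_Ioo_eq_nhdsLT (show (0 : ℝ) < 1 by norm_num)]
  exact nhdsWithin_mono _ Set.Ioo_subset_Icc_self

open Filter Topology in
lemma loglog_tendsto :
    Tendsto (fun u : ℝ => Real.log u * Real.log (1 - u)) (𝓝[>] 0) (𝓝 0) := by
  have h1 : HasDerivAt (fun u : ℝ => Real.log (1 - u)) (-1) 0 := by
    have := ((hasDerivAt_id (0 : ℝ)).const_sub 1).log (by simp)
    simpa using this
  have h2 := h1.tendsto_slope_zero_right
  have h0 : Tendsto (fun x : ℝ => Real.log x * x) (𝓝[>] 0) (𝓝 0) := by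
    simpa only [Real.rpow_one] using tendsto_log_mul_rpow_nhdsGT_zero zero_lt_one
  have h3 := h0.mul h2
  simp only [zero_mul] at h3
  refine h3.congr' ?_
  filter_upwards [self_mem_nhdsWithin] with u hu
  have : u ≠ 0 := ne_of_gt hu
  simp
  field_simp

open Filter Topology in
lemma dilog_reflection : ∀ x ∈ Set.Ioo (0 : ℝ) 1,
    dilog x + dilog (1 - x) + Real.log x * Real.log (1 - x) = π ^ 2 / 6 := by
  apply const_of_deriv_zero
  · intro x hx
    have hx0 : x ≠ 0 := ne_of_gt hx.1
    have hx1 : 1 - x ≠ 0 := by linarith [hx.2]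
    have e1 := dilog_deriv (x := x) (by rw [abs_lt]; constructor <;> linarith [hx.1, hx.2]) hx0
    have e2 := dilog_deriv (x := 1 - x)
      (by rw [abs_lt]; constructor <;> linarith [hx.1, hx.2]) hx1
    have i1 : HasDerivAt (fun y : ℝ => 1 - y) (-1) x := (hasDerivAt_id x).const_sub 1
    have e3 := e2.comp x i1
    have e4 := (Real.hasDerivAt_log hx0).mul (i1.log hx1)
    refine ((e1.add e3).add e4).congr_deriv ?_
    simp only [sub_sub_cancel]
    field_simp
    ring
  · have t1 : Tendsto dilog (𝓝[>] 0) (𝓝 0) := by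
      have := dilog_deriv_zero.continuousAt.tendsto
      rw [dilog_zero] at this
      exact this.mono_left nhdsWithin_le_nhds
    have t2 : Tendsto (fun x : ℝ => 1 - x) (𝓝[>] 0) (𝓝[<] 1) := by
      refine tendsto_nhdsWithin_iff.2 ⟨?_, ?_⟩
      · have : Tendsto (fun x : ℝ => 1 - x) (𝓝 0) (𝓝 (1 - 0)) :=
          (continuous_const.sub continuous_id).tendsto 0
        simp only [sub_zero] at this
        exact this.mono_left nhdsWithin_le_nhds
      · filter_upwards [self_mem_nhdsWithin] with x hx
        have : (0 : ℝ) < x := hx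
        show 1 - x < 1
        linarith
    have := (t1.add (dilog_tendsto_one.comp t2)).add loglog_tendsto
    simpa using this

open Filter Topology in
lemma dilog_dup : ∀ x ∈ Set.Ioo (0 : ℝ) 1,
    dilog (x ^ 2) - 2 * (dilog x + dilog (-x)) = 0 := by
  apply const_of_deriv_zero
  · intro x hx
    have hx0 : x ≠ 0 := ne_of_gt hx.1
    have hx1 : 1 - x ≠ 0 := by linarith [hx.2]
    have hx2 : 1 + x ≠ 0 := by linarith [hx.1]
    have e1 := dilog_deriv (x := x) (by rw [abs_lt]; constructor <;> linarith [hx.1, hx.2]) hx0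
    have e2 := dilog_deriv (x := -x)
      (by rw [abs_lt]; constructor <;> linarith [hx.1, hx.2]) (neg_ne_zero.2 hx0)
    have e3 := dilog_deriv (x := x ^ 2)
      (by rw [abs_lt]; constructor <;> nlinarith [hx.1, hx.2]) (pow_ne_zero _ hx0)
    have i1 : HasDerivAt (fun y : ℝ => -y) (-1) x := (hasDerivAt_id x).neg
    have i2 : HasDerivAt (fun y : ℝ => y ^ 2) (2 * x) x := by simpa using hasDerivAt_pow 2 x
    have e4 := e2.comp x i1
    have e5 := HasDerivAt.comp (h := fun y : ℝ => y ^ 2) x e3 i2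
    refine (e5.sub ((e1.add e4).const_mul 2)).congr_deriv ?_
    have : 1 - x ^ 2 = (1 - x) * (1 + x) := by ring
    rw [this, Real.log_mul hx1 hx2, sub_neg_eq_add]
    field_simp
    ring
  · have t1 := dilog_deriv_zero.continuousAt
    have : ContinuousAt (fun x : ℝ => dilog (x ^ 2) - 2 * (dilog x + dilog (-x))) 0 := by
      refine ContinuousAt.sub ?_ (continuousAt_const.mul (t1.add ?_))
      · exact ContinuousAt.comp (f := fun x : ℝ => x ^ 2) (g := dilog) (by simpa using t1)
          (by fun_prop)
      · exact ContinuousAt.comp (f := fun x : ℝ => -x) (g := dilog) (by simpa using t1)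
          (by fun_prop)
    have := this.tendsto.mono_left (nhdsWithin_le_nhds (s := Set.Ioi 0))
    simpa [dilog_zero] using this

open Filter Topology in
lemma dilog_landen : ∀ y ∈ Set.Ioo (0 : ℝ) (1 / 2),
    dilog (-y / (1 - y)) + dilog y + (Real.log (1 - y)) ^ 2 / 2 = 0 := by
  apply const_of_deriv_zero
  · intro x hx
    have hx0 : x ≠ 0 := ne_of_gt hx.1
    have hp : 0 < 1 - x := by linarith [hx.2]
    have hx1 : 1 - x ≠ 0 := hp.ne'
    have e1 := dilog_deriv (x := x) (by rw [abs_lt]; constructor <;> linarith [hx.1, hx.2]) hx0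
    have e2 := dilog_deriv (x := -x / (1 - x))
      (by
        rw [abs_lt, lt_div_iff₀ hp, div_lt_iff₀ hp]
        constructor <;> linarith [hx.1, hx.2]) (div_ne_zero (neg_ne_zero.2 hx0) hx1)
    have i1 : HasDerivAt (fun y : ℝ => 1 - y) (-1) x := (hasDerivAt_id x).const_sub 1
    have i2 : HasDerivAt (fun y : ℝ => -y / (1 - y)) (-1 / (1 - x) ^ 2) x := by
      refine ((hasDerivAt_id x).neg.div i1 hx1).congr_deriv ?_
      simp
    have e3 := e2.comp x i2
    have e4 := ((i1.log hx1).pow 2).div_const 2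
    refine ((e3.add e1).add e4).congr_deriv ?_
    have : 1 - -x / (1 - x) = (1 - x)⁻¹ := by field_simp; ring
    rw [this, Real.log_inv]
    field_simp
    norm_num
    ring
  · have t1 := dilog_deriv_zero.continuousAt
    have : ContinuousAt (fun y : ℝ => dilog (-y / (1 - y)) + dilog y
        + (Real.log (1 - y)) ^ 2 / 2) 0 := by
      refine ContinuousAt.add (ContinuousAt.add ?_ t1) ?_
      · exact ContinuousAt.comp (f := fun y : ℝ => -y / (1 - y)) (g := dilog) (by simpa using t1)
          (ContinuousAt.div (by fun_prop) (by fun_prop) (by norm_num))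
      · refine ContinuousAt.div_const (ContinuousAt.pow (ContinuousAt.log (by fun_prop) ?_) 2) 2
        norm_num
    have := this.tendsto.mono_left (nhdsWithin_le_nhds (s := Set.Ioi 0))
    simpa [dilog_zero] using this

lemma dilog_golden {x : ℝ} (hx0 : 0 < x) (hx : x ^ 2 = 1 - x) :
    dilog (x ^ 2) = π ^ 2 / 15 - (Real.log x) ^ 2 := by
  have hx1 : x < 1 := by nlinarith
  have hh : x ^ 2 < 1 / 2 := by nlinarith
  have r := dilog_reflection x ⟨hx0, hx1⟩
  have d := dilog_dup x ⟨hx0, hx1⟩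
  have l := dilog_landen (x ^ 2) ⟨by positivity, hh⟩
  have e1 : 1 - x ^ 2 = x := by linarith
  have e2 : -x ^ 2 / x = -x := by field_simp
  rw [e1, e2] at l
  rw [← hx, Real.log_pow] at r
  push_cast at r
  linarith

/-- Coefficients of `(1 - x) ^ (-1/2)`. -/
noncomputable def bco (n : ℕ) : ℝ := poch (1 / 2) n / (n.factorial : ℝ)

lemma poch_succ (a : ℝ) (n : ℕ) : poch a (n + 1) = poch a n * (a + n) := by
  simp [poch, ascPochhammer_succ_eval]

lemma poch_zero (a : ℝ) : poch a 0 = 1 := by simp [poch]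

lemma poch_pos (n : ℕ) : 0 < poch (1 / 2) n := by
  induction n with
  | zero => simp [poch_zero]
  | succ n ih => rw [poch_succ]; positivity

lemma poch_three_half (n : ℕ) : poch (3 / 2) n = (2 * n + 1) * poch (1 / 2) n := by
  induction n with
  | zero => simp [poch_zero]
  | succ n ih => rw [poch_succ, poch_succ, ih]; push_cast; ring

lemma bco_pos (n : ℕ) : 0 < bco n := div_pos (poch_pos n) (by positivity)

lemma bco_le (n : ℕ) : bco n ≤ 1 := by
  unfold bco
  rw [div_le_one (by positivity)]
  induction n with
  | zero => simp [poch_zero]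
  | succ n ih =>
    rw [poch_succ, Nat.factorial_succ, mul_comm]
    push_cast
    have := (poch_pos n).le
    refine mul_le_mul ?_ ih this (by positivity)
    linarith

lemma bco_hasSum {x : ℝ} (hx : |x| < 1) :
    HasSum (fun n => bco n * x ^ n) (√(1 - x))⁻¹ := by
  have h := (Real.one_div_one_sub_rpow_hasFPowerSeriesOnBall_zero (1 / 2)).hasSum (y := x)
    (by simpa [enorm_eq_nnnorm, ← NNReal.coe_lt_one] using hx)
  rw [zero_add, ← Real.sqrt_eq_rpow, one_div (√(1 - x))] at h
  refine Eq.mp (congrArg (fun f => HasSum f _) (funext fun n => ?_)) h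
  symm
  have h2 := Ring.factorial_nsmul_multichoose_eq_ascPochhammer (1 / 2 : ℝ) n
  rw [Polynomial.ascPochhammer_smeval_eq_eval, Ring.multichoose_eq] at h2
  have h3 : bco n = Ring.choose ((1 / 2 : ℝ) + n - 1) n := by
    rw [bco, poch, ← h2, nsmul_eq_mul]
    field_simp
  rw [h3]
  simp [FormalMultilinearSeries.ofScalars]

/-- The series of arsinh. -/
noncomputable def arser : ℝ → ℝ := intSer (fun n => bco n * (-1) ^ n) (fun n => 2 * n)

lemma arser_eq {x : ℝ} (hx : |x| < 1) : arser x = Real.arsinh x := by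
  have hd : ∀ y ∈ Set.Ioo (-1 : ℝ) 1, HasDerivAt (fun z => arser z - Real.arsinh z) 0 y := by
    intro y hy
    have hy' : |y| < 1 := abs_lt.2 hy
    have h := intSer_deriv (fun n => bco n * (-1) ^ n) (fun n => 2 * n) (fun n => by
      rw [abs_mul, abs_pow, abs_neg, abs_one, one_pow, mul_one, abs_of_pos (bco_pos n)]
      exact bco_le n) (fun n => by omega) hy'
    refine (h.sub (Real.hasDerivAt_arsinh y)).congr_deriv ?_
    have hs := (bco_hasSum (x := -y ^ 2) (by
      rw [abs_neg, abs_pow]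
      exact pow_lt_one₀ (abs_nonneg _) hy' (by norm_num))).tsum_eq
    rw [sub_neg_eq_add] at hs
    rw [← hs, sub_eq_zero]
    congr 1
    ext n
    rw [neg_pow (y ^ 2), ← pow_mul, mul_assoc]
  have := isOpen_Ioo.is_const_of_deriv_eq_zero isPreconnected_Ioo
      (fun z hz => (hd z hz).differentiableAt.differentiableWithinAt)
      (fun z hz => (hd z hz).deriv) (abs_lt.1 hx) (show (0 : ℝ) ∈ Set.Ioo (-1 : ℝ) 1 by simp)
  simp only [arser, intSer_zero, Real.arsinh_zero, sub_zero] at this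
  exact sub_eq_zero.1 this

/-- The series of the integral of `arsinh x / x`. -/
noncomputable def hser : ℝ → ℝ :=
  intSer (fun n => bco n * (-1) ^ n / (2 * (n : ℝ) + 1)) (fun n => 2 * n)

lemma hser_deriv' {x : ℝ} (hx : |x| < 1) :
    HasDerivAt hser (∑' n : ℕ, bco n * (-1) ^ n / (2 * (n : ℝ) + 1) * x ^ (2 * n)) x :=
  intSer_deriv (fun n => bco n * (-1) ^ n / (2 * (n : ℝ) + 1)) (fun n => 2 * n) (fun n => by
    rw [abs_div, abs_mul, abs_pow, abs_neg, abs_one, one_pow, mul_one, abs_of_pos (bco_pos n),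
      abs_of_pos (by positivity), div_le_one (by positivity)]
    have : (0 : ℝ) ≤ n := by positivity
    linarith [bco_le n]) (fun n => by omega) hx

lemma hser_deriv {x : ℝ} (hx : |x| < 1) (h0 : x ≠ 0) :
    HasDerivAt hser (Real.arsinh x / x) x := by
  refine (hser_deriv' hx).congr_deriv ?_
  rw [← arser_eq hx, arser, intSer, ← tsum_div_const]
  congr 1
  ext n
  push_cast
  field_simp
  ring

open Filter Topology in
lemma hser_sinh : ∀ t ∈ Set.Ioo (0 : ℝ) (Real.arsinh 1),
    hser (Real.sinh t) - t ^ 2 / 2 - t * Real.log (1 - Real.exp (-2 * t))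
      + dilog (Real.exp (-2 * t)) / 2 = π ^ 2 / 12 := by
  apply const_of_deriv_zero
  · intro t ht
    have hs0 : 0 < Real.sinh t := Real.sinh_pos_iff.2 ht.1
    have hs1 : Real.sinh t < 1 := by
      have := Real.sinh_lt_sinh.2 ht.2
      rwa [Real.sinh_arsinh] at this
    have he0 := Real.exp_pos (-2 * t)
    have he1 : Real.exp (-2 * t) < 1 := by
      rw [Real.exp_lt_one_iff]
      linarith [ht.1]
    have e1 := (hser_deriv (x := Real.sinh t) (abs_lt.2 ⟨by linarith, hs1⟩) hs0.ne').comp t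
      (Real.hasDerivAt_sinh t)
    rw [Real.arsinh_sinh] at e1
    have i1 : HasDerivAt (fun t : ℝ => Real.exp (-2 * t)) (Real.exp (-2 * t) * (-2)) t := by
      have := ((hasDerivAt_id t).const_mul (-2)).exp
      simpa using this
    have hne : 1 - Real.exp (-2 * t) ≠ 0 := by linarith
    have e2 := (dilog_deriv (x := Real.exp (-2 * t)) (abs_lt.2 ⟨by linarith, he1⟩) he0.ne').comp t
      i1
    have e3 := (hasDerivAt_id t).mul ((i1.const_sub 1).log hne)
    have e4 := ((hasDerivAt_id t).pow 2).div_const 2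
    refine (((e1.sub e4).sub e3).add (e2.div_const 2)).congr_deriv ?_
    have k1 : Real.cosh t / Real.sinh t = (1 + Real.exp (-2 * t)) / (1 - Real.exp (-2 * t)) := by
      rw [div_eq_div_iff hs0.ne' hne, Real.cosh_eq, Real.sinh_eq]
      have : Real.exp (-2 * t) = Real.exp (-t) * Real.exp (-t) := by
        rw [← Real.exp_add]; ring_nf
      have h5 : Real.exp t * Real.exp (-t) = 1 := by
        rw [← Real.exp_add]; simp
      rw [this]
      linear_combination (-Real.exp (-t)) * h5
    have k2 : t / Real.sinh t * Real.cosh t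
        = t * ((1 + Real.exp (-2 * t)) / (1 - Real.exp (-2 * t))) := by
      rw [← k1]; ring
    rw [k2]
    simp only [id, Nat.cast_ofNat]
    generalize Real.exp (-2 * t) = E at *
    field_simp
    ring
  · have t0 : Tendsto (fun t : ℝ => Real.exp (-2 * t)) (𝓝[>] 0) (𝓝[<] 1) := by
      refine tendsto_nhdsWithin_iff.2 ⟨?_, ?_⟩
      · have : Tendsto (fun t : ℝ => Real.exp (-2 * t)) (𝓝 0) (𝓝 (Real.exp (-2 * 0))) :=
          Continuous.tendsto (by fun_prop) 0
        simp only [mul_zero, Real.exp_zero] at this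
        exact this.mono_left nhdsWithin_le_nhds
      · filter_upwards [self_mem_nhdsWithin] with x hx
        have : (0 : ℝ) < x := hx
        show Real.exp (-2 * x) < 1
        rw [Real.exp_lt_one_iff]
        linarith
    have t1 : Tendsto (fun t : ℝ => 1 - Real.exp (-2 * t)) (𝓝[>] 0) (𝓝[>] 0) := by
      obtain ⟨a, b⟩ := tendsto_nhdsWithin_iff.1 t0
      refine tendsto_nhdsWithin_iff.2 ⟨?_, ?_⟩
      · simpa using a.const_sub 1
      · filter_upwards [b] with x hx
        have : Real.exp (-2 * x) < 1 := hx
        show 0 < 1 - Real.exp (-2 * x)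
        linarith
    have t2 : Tendsto (fun t : ℝ => t * Real.log (1 - Real.exp (-2 * t))) (𝓝[>] 0) (𝓝 0) := by
      have := (loglog_tendsto.comp t1).mul_const (-1 / 2)
      simp only [zero_mul] at this
      refine this.congr ?_
      intro t
      simp only [Function.comp, sub_sub_cancel, Real.log_exp]
      ring
    have t3 : Tendsto (fun t : ℝ => hser (Real.sinh t) - t ^ 2 / 2) (𝓝[>] 0) (𝓝 0) := by
      have hc := (hser_deriv' (x := 0) (by simp)).continuousAt
      have : ContinuousAt (fun t : ℝ => hser (Real.sinh t) - t ^ 2 / 2) 0 := by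
        refine ContinuousAt.sub ?_ (by fun_prop)
        exact ContinuousAt.comp (f := Real.sinh) (g := hser) (by simpa using hc)
          Real.continuous_sinh.continuousAt
      have := this.tendsto.mono_left (nhdsWithin_le_nhds (s := Set.Ioi 0))
      simpa [hser, intSer_zero] using this
    have := (t3.sub t2).add ((dilog_tendsto_one.comp t0).div_const 2)
    rw [show (0 : ℝ) - 0 + π ^ 2 / 6 / 2 = π ^ 2 / 12 by ring] at this
    exact this

/-- `₃F₂(1/2, 1/2, 1/2; 3/2, 3/2; -1/4) = π²/10`. -/
theorem threeF_two_neg_quarter :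
    ∑' n : ℕ, (poch (1/2) n)^3 / ((poch (3/2) n)^2 * (n.factorial : ℝ)) * (-1/4 : ℝ)^n
      = π^2 / 10 := by
  have h5 : (√5) ^ 2 = 5 := Real.sq_sqrt (by norm_num)
  have h5' : 1 < √5 := by
    rw [Real.lt_sqrt (by norm_num)]; norm_num
  obtain ⟨x, hx0, hx⟩ : ∃ x : ℝ, 0 < x ∧ x ^ 2 = 1 - x :=
    ⟨(√5 - 1) / 2, by linarith, by linear_combination h5 / 4⟩
  have hsinh : Real.sinh (-Real.log x) = 1 / 2 := by
    rw [Real.sinh_eq, neg_neg, Real.exp_neg, Real.exp_log hx0]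
    field_simp
    linarith
  have ht0 : 0 < -Real.log x := by
    rw [← Real.sinh_pos_iff, hsinh]; norm_num
  have ht1 : -Real.log x < Real.arsinh 1 := by
    rw [← Real.sinh_lt_sinh, hsinh, Real.sinh_arsinh]; norm_num
  have key := hser_sinh _ ⟨ht0, ht1⟩
  have hexp : Real.exp (-2 * -Real.log x) = x ^ 2 := by
    rw [show -2 * -Real.log x = Real.log x + Real.log x by ring, Real.exp_add, Real.exp_log hx0]
    ring
  rw [hsinh, hexp, dilog_golden hx0 hx, show 1 - x ^ 2 = x by linarith] at key
  have hfin : hser (1 / 2) = π ^ 2 / 20 := by linarith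
  have : ∑' n : ℕ, (poch (1/2) n)^3 / ((poch (3/2) n)^2 * (n.factorial : ℝ)) * (-1/4 : ℝ)^n
      = 2 * hser (1 / 2) := by
    rw [hser, intSer, ← tsum_mul_left]
    congr 1
    ext n
    have hp := (poch_pos n).ne'
    have e : (-1 / 4 : ℝ) ^ n = (-1) ^ n * (1 / 2) ^ (2 * n) := by
      rw [pow_mul, ← mul_pow]; norm_num
    rw [poch_three_half, bco, e, pow_succ]
    push_cast
    field_simp
    ring
  rw [this, hfin]
  ring
end

section
/- π²/10 equals (1/16) times the sum over n ≥ 0 of (4n·(4n·(12n+29)+81)+71) / ((4n+1)²·(4n+3)²·n!) · Γ(2n+1/2)/Γ(n+3/2) · (1/64)ⁿ, where Γ denotes the Euler gamma function. -/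
open Real

section aux
open Set Filter Topology

lemma ps_deriv (c : ℕ → ℝ) (hc : ∀ n, |c n| ≤ 1) (e : ℕ → ℕ) (he : ∀ n, n ≤ e n) (x : ℝ)
    (hx : |x| < 1) :
    HasDerivAt (fun y : ℝ => ∑' n, c n * y ^ (e n + 1) / ((e n : ℝ) + 1)) (∑' n, c n * x ^ (e n)) x := by
  obtain ⟨r, hr1, hr2⟩ := exists_between hx
  have hr0 : 0 ≤ r := (abs_nonneg x).trans hr1.le
  refine hasDerivAt_tsum_of_isPreconnected (F := ℝ) (g := fun n y => c n * y ^ (e n + 1) / ((e n : ℝ) + 1))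
    (g' := fun n y => c n * y ^ (e n)) (u := fun n => r ^ n) (t := Metric.ball (0:ℝ) r) (y₀ := (0:ℝ))
    (summable_geometric_of_lt_one hr0 hr2) Metric.isOpen_ball
    (convex_ball _ _).isPreconnected ?_ ?_ ?_ ?_ ?_
  · intro n y _
    have h : ((e n : ℝ) + 1) ≠ 0 := by positivity
    have := ((hasDerivAt_pow (e n + 1) y).const_mul (c n)).div_const ((e n : ℝ) + 1)
    refine HasDerivAt.congr_deriv this ?_
    push_cast
    field_simp
  · intro n y hy
    have hy' : |y| < r := by simpa using hy
    rw [norm_mul, norm_pow, Real.norm_eq_abs, Real.norm_eq_abs]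
    calc |c n| * |y| ^ e n ≤ 1 * r ^ e n := by
          gcongr
          exact hc n
      _ = r ^ e n := one_mul _
      _ ≤ r ^ n := pow_le_pow_of_le_one hr0 hr2.le (he n)
  · simpa using (abs_nonneg x).trans_lt hr1
  · simp [summable_zero]
  · simpa using hr1

lemma const_lim (f : ℝ → ℝ) (b c : ℝ) (hf : ∀ x ∈ Ioo 0 b, HasDerivAt f 0 x)
    (hl : Tendsto f (𝓝[>] 0) (𝓝 c)) : ∀ x ∈ Ioo 0 b, f x = c := by
  intro x hx
  have hb : 0 < b := hx.1.trans hx.2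
  have h : ∀ y ∈ Ioo 0 b, f y = f x := fun y hy =>
    isOpen_Ioo.is_const_of_deriv_eq_zero isPreconnected_Ioo
      (fun z hz => (hf z hz).differentiableAt.differentiableWithinAt)
      (fun z hz => (hf z hz).deriv) hy hx
  refine tendsto_nhds_unique (Tendsto.congr' ?_ tendsto_const_nhds) hl
  filter_upwards [Ioo_mem_nhdsGT hb] with y hy
  exact (h y hy).symm

lemma log_log_lim : Tendsto (fun y : ℝ => log y * log (1 - y)) (𝓝[>] 0) (𝓝 0) := by
  have h1 : Tendsto (fun y : ℝ => log y * y) (𝓝[>] 0) (𝓝 0) := by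
    have := tendsto_log_mul_rpow_nhdsGT_zero (r := 1) one_pos
    simpa using this
  have h2 : HasDerivAt (fun y : ℝ => log (1 - y)) (-1) 0 := by
    have := ((hasDerivAt_id (0:ℝ)).const_sub 1).log (by simp)
    simpa using this
  have h3 := h2.tendsto_slope_zero_right
  simp only [zero_add, sub_zero, log_one, smul_eq_mul] at h3
  have := h1.mul h3
  rw [zero_mul] at this
  refine this.congr' ?_
  filter_upwards [self_mem_nhdsWithin] with y hy
  have : y ≠ 0 := (ne_of_gt hy)
  field_simp

noncomputable def dilogB (m : ℕ) : ℝ := Ring.choose (-1/2 : ℝ) m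

lemma dilogB_zero : dilogB 0 = 1 := by simp [dilogB]

lemma dilogB_succ (m : ℕ) : dilogB (m + 1) = - (2 * m + 1) / (2 * (m + 1)) * dilogB m := by
  have h1 := Ring.descPochhammer_eq_factorial_smul_choose (-1/2 : ℝ) m
  have h2 := Ring.descPochhammer_eq_factorial_smul_choose (-1/2 : ℝ) (m+1)
  rw [descPochhammer_succ_right, Polynomial.smeval_mul, h1] at h2
  simp [Polynomial.smeval_natCast, Nat.factorial_succ] at h2
  have : (m.factorial : ℝ) ≠ 0 := by positivity
  unfold dilogB
  field_simp
  have h3 : (m.factorial : ℝ) * ((2 * (m + 1)) * Ring.choose (-1/2 : ℝ) (m+1)) = 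
    m.factorial * (- (2 * m + 1) * Ring.choose (-1/2 : ℝ) m) := by linarith
  have := mul_left_cancel₀ this h3
  linarith

lemma dilogB_abs (m : ℕ) : |dilogB m| ≤ 1 := by
  induction m with
  | zero => simp [dilogB_zero]
  | succ m ih =>
    rw [dilogB_succ, abs_mul]
    refine mul_le_one₀ ?_ (abs_nonneg _) ih
    rw [abs_div, abs_neg, abs_of_pos (by positivity), abs_of_pos (by positivity)]
    rw [div_le_one (by positivity)]
    linarith

lemma dilogB_sum (x : ℝ) (hx : |x| < 1) : ∑' n, dilogB n * x ^ (2 * n) = (√(1 + x ^ 2))⁻¹ := by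
  have h := Real.one_add_rpow_hasFPowerSeriesOnBall_zero (a := -1/2)
  have hx2 : |x| ^ 2 < 1 := by nlinarith [abs_nonneg x]
  have h2 := h.hasSum (y := x ^ 2) (by
    rw [← ENNReal.ofReal_one, Metric.eball_ofReal]
    simpa using hx2)
  have h3 := h2.tsum_eq
  simp only [binomialSeries_apply] at h3
  simp at h3
  rw [sqrt_eq_rpow, ← rpow_neg (by positivity)]
  rw [show (-(1/2) : ℝ) = -1/2 by norm_num]
  rw [← h3]
  refine tsum_congr fun n => ?_
  rw [pow_mul, dilogB]

lemma arsinh_series (x : ℝ) (hx : |x| < 1) :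
    ∑' n, dilogB n * x ^ (2 * n + 1) / (((2 * n : ℕ) : ℝ) + 1) = arsinh x := by
  have key := isOpen_Ioo.eqOn_of_deriv_eq (s := Ioo (-1:ℝ) 1) (x := 0)
    (f := fun x => ∑' n, dilogB n * x ^ (2 * n + 1) / (((2 * n : ℕ) : ℝ) + 1)) (g := arsinh)
    isPreconnected_Ioo
    (fun z hz => (ps_deriv dilogB dilogB_abs (fun n => 2 * n) (fun n => by omega) z
      (abs_lt.2 hz)).differentiableAt.differentiableWithinAt)
    (differentiable_arsinh.differentiableOn) (fun z hz => by
      rw [(ps_deriv dilogB dilogB_abs (fun n => 2 * n) (fun n => by omega) z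
      (abs_lt.2 hz)).deriv, (hasDerivAt_arsinh z).deriv, dilogB_sum z (abs_lt.2 hz)])
    (by simp) (by simp)
  exact key (abs_lt.1 hx)

noncomputable def dilogG (x : ℝ) : ℝ :=
  ∑' n, dilogB n / (((2 * n : ℕ) : ℝ) + 1) * x ^ (2 * n + 1) / (((2 * n : ℕ) : ℝ) + 1)

lemma dilogG_deriv (x : ℝ) (hx : |x| < 1) (hx0 : x ≠ 0) :
    HasDerivAt dilogG (arsinh x / x) x := by
  have := ps_deriv (fun n => dilogB n / (((2 * n : ℕ) : ℝ) + 1)) (fun n => by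
    rw [abs_div, abs_of_pos (a := ((2 * n : ℕ) : ℝ) + 1) (by positivity)]
    rw [div_le_one (by positivity)]
    refine (dilogB_abs n).trans ?_
    have : (0:ℝ) ≤ ((2 * n : ℕ) : ℝ) := by positivity
    linarith) (fun n => 2 * n) (fun n => by omega) x hx
  refine HasDerivAt.congr_deriv this ?_
  symm
  rw [← arsinh_series x hx, ← tsum_div_const]
  refine tsum_congr fun n => ?_
  rw [pow_succ]
  field_simp

lemma dilogG_cont0 : ContinuousAt dilogG 0 := by
  have := ps_deriv (fun n => dilogB n / (((2 * n : ℕ) : ℝ) + 1)) (fun n => by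
    rw [abs_div, abs_of_pos (a := ((2 * n : ℕ) : ℝ) + 1) (by positivity)]
    rw [div_le_one (by positivity)]
    refine (dilogB_abs n).trans ?_
    have : (0:ℝ) ≤ ((2 * n : ℕ) : ℝ) := by positivity
    linarith) (fun n => 2 * n) (fun n => by omega) 0 (by simp)
  exact this.continuousAt

lemma dilogG_zero : dilogG 0 = 0 := by simp [dilogG]

noncomputable def dilogL (x : ℝ) : ℝ := ∑' n : ℕ, 1 / ((n : ℝ) + 1) * x ^ (n + 1) / ((n : ℝ) + 1)

lemma dilogL_deriv' (x : ℝ) (hx : |x| < 1) :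
    HasDerivAt dilogL (∑' n : ℕ, 1 / ((n : ℝ) + 1) * x ^ n) x := by
  exact ps_deriv (fun n => 1 / ((n : ℝ) + 1)) (fun n => by
    rw [abs_of_pos (by positivity), div_le_one (by positivity)]
    linarith [n.cast_nonneg (α := ℝ)]) (fun n => n) (fun n => le_rfl) x hx

lemma dilogL_deriv (x : ℝ) (hx : |x| < 1) (hx0 : x ≠ 0) :
    HasDerivAt dilogL (-log (1 - x) / x) x := by
  convert dilogL_deriv' x hx using 1
  rw [← (hasSum_pow_div_log_of_abs_lt_one hx).tsum_eq, ← tsum_div_const]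
  refine tsum_congr fun n => ?_
  rw [pow_succ]
  field_simp

lemma dilogL_zero : dilogL 0 = 0 := by simp [dilogL]

lemma dilogL_summable (x : ℝ) (hx : |x| ≤ 1) :
    Summable fun n : ℕ => 1 / ((n : ℝ) + 1) * x ^ (n + 1) / ((n : ℝ) + 1) := by
  have hs : Summable fun n : ℕ => (1 : ℝ) / ((n + 1 : ℕ) : ℝ) ^ 2 :=
    (summable_nat_add_iff 1).2 hasSum_zeta_two.summable
  refine Summable.of_norm_bounded hs fun n => ?_
  rw [norm_div, norm_mul, norm_pow, norm_eq_abs, norm_eq_abs, norm_eq_abs, 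
    abs_of_pos (a := (n:ℝ) + 1) (by positivity), abs_of_pos (a := 1 / ((n:ℝ) + 1)) (by positivity)]
  push_cast
  have := pow_le_one₀ (n := n + 1) (abs_nonneg x) hx
  rw [one_div_mul_eq_div, div_div, ← sq]
  gcongr

lemma dilogL_one : dilogL 1 = π ^ 2 / 6 := by
  have h := hasSum_zeta_two
  rw [← hasSum_nat_add_iff' 1] at h
  simp at h
  rw [← h.tsum_eq, dilogL]
  refine tsum_congr fun n => ?_
  simp
  field_simp

lemma dilogL_cont : ContinuousOn dilogL (Icc (-1) 1) := by
  have hs : Summable fun n : ℕ => (1 : ℝ) / ((n + 1 : ℕ) : ℝ) ^ 2 :=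
    (summable_nat_add_iff 1).2 hasSum_zeta_two.summable
  refine continuousOn_tsum (fun n => by fun_prop) hs fun n x hx => ?_
  rw [norm_div, norm_mul, norm_pow, norm_eq_abs, norm_eq_abs, norm_eq_abs, 
    abs_of_pos (a := (n:ℝ) + 1) (by positivity), abs_of_pos (a := 1 / ((n:ℝ) + 1)) (by positivity)]
  push_cast
  have := pow_le_one₀ (n := n + 1) (abs_nonneg x) (abs_le.2 hx)
  rw [one_div_mul_eq_div, div_div, ← sq]
  gcongr

lemma dilogL_lim1 : Tendsto dilogL (𝓝[<] 1) (𝓝 (π ^ 2 / 6)) := by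
  rw [← dilogL_one]
  have := dilogL_cont 1 (by simp)
  refine this.mono_left ?_
  rw [← nhdsWithin_Ioo_eq_nhdsLT (show (-1:ℝ) < 1 by norm_num)]
  exact nhdsWithin_mono _ Ioo_subset_Icc_self

lemma dilogL_lim0 : Tendsto dilogL (𝓝 0) (𝓝 0) := by
  have := (dilogL_deriv' 0 (by simp)).continuousAt
  rw [ContinuousAt, dilogL_zero] at this
  exact this

lemma reflection (x : ℝ) (hx : x ∈ Ioo (0:ℝ) 1) :
    dilogL x + dilogL (1 - x) + log x * log (1 - x) = π ^ 2 / 6 := by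
  refine const_lim (fun x => dilogL x + dilogL (1 - x) + log x * log (1 - x)) 1 _ ?_ ?_ x hx
  · intro x ⟨h0, h1⟩
    have d1 := dilogL_deriv x (by rw [abs_lt]; constructor <;> linarith) h0.ne'
    have e : HasDerivAt (fun x : ℝ => 1 - x) (-1) x := by
      simpa using (hasDerivAt_id x).const_sub 1
    have d2 := (dilogL_deriv (1 - x) (by rw [abs_lt]; constructor <;> linarith)
      (by linarith)).comp x e
    have d3 := (hasDerivAt_log h0.ne').mul (e.log (by linarith))
    refine HasDerivAt.congr_deriv ((d1.add d2).add d3) ?_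
    have : 1 - x ≠ 0 := by linarith
    have := h0.ne'
    rw [sub_sub_cancel]
    field_simp
    ring
  · have t1 : Tendsto (fun x : ℝ => 1 - x) (𝓝[>] 0) (𝓝[<] 1) := by
      refine tendsto_nhdsWithin_iff.2 ⟨?_, ?_⟩
      · have : Continuous fun x : ℝ => 1 - x := by fun_prop
        simpa using (this.tendsto 0).mono_left nhdsWithin_le_nhds
      · filter_upwards [self_mem_nhdsWithin] with y hy
        simpa using hy
    have := ((dilogL_lim0.mono_left nhdsWithin_le_nhds).add (dilogL_lim1.comp t1)).add log_log_lim
    simpa using this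

lemma landen (x : ℝ) (hx : x ∈ Ioo (0:ℝ) (1/2)) :
    dilogL x + dilogL (-x / (1 - x)) + log (1 - x) ^ 2 / 2 = 0 := by
  refine const_lim (fun x => dilogL x + dilogL (-x / (1 - x)) + log (1 - x) ^ 2 / 2) (1/2) _ ?_ ?_ x hx
  · intro x ⟨h0, h1⟩
    have d1 := dilogL_deriv x (by rw [abs_lt]; constructor <;> linarith) h0.ne'
    have hp : 0 < 1 - x := by linarith
    have e : HasDerivAt (fun x : ℝ => 1 - x) (-1) x := by
      simpa using (hasDerivAt_id x).const_sub 1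
    have e2 := (hasDerivAt_neg x).div e hp.ne'
    have d2 := (dilogL_deriv (-x / (1 - x)) (by
      rw [abs_lt, lt_div_iff₀ hp, div_lt_iff₀ hp]; constructor <;> linarith)
      (div_ne_zero (by linarith) hp.ne')).comp x e2
    have d3 := ((e.log hp.ne').pow 2).div_const 2
    refine HasDerivAt.congr_deriv ((d1.add d2).add d3) ?_
    have := h0.ne'
    have h4 : 1 - -x / (1 - x) = (1 - x)⁻¹ := by field_simp; ring
    rw [h4, log_inv]
    field_simp
    ring
  · have t1 : ContinuousAt (fun x : ℝ => -x / (1 - x)) 0 := by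
      apply ContinuousAt.div <;> first | fun_prop | simp
    have t2 : ContinuousAt (fun x : ℝ => log (1 - x) ^ 2 / 2) 0 := by
      apply ContinuousAt.div_const
      apply ContinuousAt.pow
      apply ContinuousAt.log <;> first | fun_prop | simp
    have t1' : Tendsto (fun x : ℝ => -x / (1 - x)) (𝓝 0) (𝓝 0) := by simpa using t1.tendsto
    have := (dilogL_lim0.add (dilogL_lim0.comp t1')).add t2.tendsto
    simpa using this.mono_left nhdsWithin_le_nhds

lemma dupl (x : ℝ) (hx : |x| ≤ 1) : dilogL x + dilogL (-x) = dilogL (x ^ 2) / 2 := by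
  have s1 := dilogL_summable x hx
  have s2 := dilogL_summable (-x) (by simpa using hx)
  obtain ⟨f, hf⟩ : ∃ f : ℕ → ℝ, f = fun n : ℕ => 1 / ((n : ℝ) + 1) * x ^ (n + 1) / ((n : ℝ) + 1) +
    1 / ((n : ℝ) + 1) * (-x) ^ (n + 1) / ((n : ℝ) + 1) := ⟨_, rfl⟩
  have s : Summable f := by rw [hf]; exact s1.add s2
  have inj0 : Function.Injective fun k : ℕ => 2 * k := fun a b h => by simpa using h
  have inj1 : Function.Injective fun k : ℕ => 2 * k + 1 := fun a b h => by simpa using h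
  have h0 : ∀ k, f (2 * k) = 0 := by
    intro k
    simp only [hf]
    rw [Odd.neg_pow ⟨k, rfl⟩]
    ring
  have h1 : ∀ k, f (2 * k + 1) = 1 / ((k : ℝ) + 1) * (x ^ 2) ^ (k + 1) / ((k : ℝ) + 1) / 2 := by
    intro k
    simp only [hf]
    rw [show 2 * k + 1 + 1 = 2 * (k + 1) by ring, Even.neg_pow ⟨k + 1, by ring⟩, pow_mul]
    push_cast
    have : (2 * (k:ℝ) + 1 + 1) = 2 * (k + 1) := by ring
    rw [this]
    field_simp
    ring
  have e : dilogL x + dilogL (-x) = ∑' n, f n := by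
    rw [hf]; exact (s1.tsum_add s2).symm
  have := tsum_even_add_odd (f := f) (s.comp_injective inj0) (s.comp_injective inj1)
  rw [e, ← this]
  simp only [h0, h1, tsum_zero, zero_add]
  rw [tsum_div_const]
  rfl

lemma dilogL_golden (a : ℝ) (ha : 0 < a) (ha2 : a ^ 2 = 1 - a) :
    dilogL (a ^ 2) = π ^ 2 / 15 - log a ^ 2 := by
  have h1 : 1/2 < a := by nlinarith
  have h2 : a < 1 := by nlinarith
  have r := reflection a ⟨ha, h2⟩
  have l := landen (a ^ 2) ⟨by positivity, by linarith⟩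
  have d := dupl a (by rw [abs_of_pos ha]; exact h2.le)
  rw [show 1 - a ^ 2 = a by linarith, neg_div, show a ^ 2 / a = a by field_simp] at l
  rw [← ha2, log_pow] at r
  push_cast at r
  linarith

lemma G_formula (u : ℝ) (hu : u ∈ Ioo 0 (arsinh 1)) :
    dilogG (sinh u) - (u ^ 2 / 2 + u * log (1 - exp (-2 * u)) - dilogL (exp (-2 * u)) / 2)
      = π ^ 2 / 12 := by
  refine const_lim (fun u => dilogG (sinh u) - (u ^ 2 / 2 + u * log (1 - exp (-2 * u)) -
    dilogL (exp (-2 * u)) / 2)) (arsinh 1) _ ?_ ?_ u hu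
  · intro u ⟨h0, h1⟩
    have s0 : 0 < sinh u := sinh_pos_iff.2 h0
    have s1 : sinh u < 1 := by
      rw [← arsinh_lt_arsinh, arsinh_sinh]; exact h1
    have d1 := (dilogG_deriv (sinh u) (by rw [abs_of_pos s0]; exact s1) s0.ne').comp u
      (hasDerivAt_sinh u)
    have e0 : 0 < exp (-2 * u) := exp_pos _
    have e1 : exp (-2 * u) < 1 := by rw [exp_lt_one_iff]; linarith
    have de : HasDerivAt (fun u : ℝ => exp (-2 * u)) (exp (-2 * u) * (-2)) u := by
      simpa using ((hasDerivAt_id u).const_mul (-2)).exp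
    have hp : 1 - exp (-2 * u) ≠ 0 := by linarith
    have d2 := (((hasDerivAt_id u).pow 2).div_const 2)
    have d3 := (hasDerivAt_id u).mul ((de.const_sub 1).log hp)
    have d4 := ((dilogL_deriv _ (by rw [abs_of_pos e0]; exact e1) e0.ne').comp u de).div_const 2
    refine HasDerivAt.congr_deriv (d1.sub ((d2.add d3).sub d4)) ?_
    rw [arsinh_sinh]
    have hs : sinh u = exp u * (1 - exp (-2 * u)) / 2 := by
      rw [sinh_eq, mul_sub, ← exp_add]; ring_nf
    have hc : cosh u = exp u * (1 + exp (-2 * u)) / 2 := by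
      rw [cosh_eq, mul_add, ← exp_add]; ring_nf
    rw [hs, hc]
    simp only [id]
    have := exp_pos u
    generalize exp (-2 * u) = z at *
    generalize exp u = w at *
    field_simp
    ring
  · have t1 : Tendsto (fun u => dilogG (sinh u)) (𝓝[>] 0) (𝓝 0) := by
      have : ContinuousAt (fun u => dilogG (sinh u)) 0 := by
        apply ContinuousAt.comp (g := dilogG)
        · simpa using dilogG_cont0
        · exact continuous_sinh.continuousAt
      have := this.tendsto
      simp only [sinh_zero, dilogG_zero] at this
      exact this.mono_left nhdsWithin_le_nhds
    have c : Continuous fun u : ℝ => exp (-2 * u) := by fun_prop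
    have ce : Tendsto (fun u : ℝ => exp (-2 * u)) (𝓝[>] 0) (𝓝[<] 1) := by
      refine tendsto_nhdsWithin_iff.2 ⟨?_, ?_⟩
      · simpa using (c.tendsto 0).mono_left nhdsWithin_le_nhds
      · filter_upwards [self_mem_nhdsWithin] with y hy
        simpa using hy
    have cy : Tendsto (fun u : ℝ => 1 - exp (-2 * u)) (𝓝[>] 0) (𝓝[>] 0) := by
      refine tendsto_nhdsWithin_iff.2 ⟨?_, ?_⟩
      · simpa using ((c.tendsto 0).const_sub 1).mono_left nhdsWithin_le_nhds
      · filter_upwards [self_mem_nhdsWithin] with y hy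
        simpa using hy
    have t2 : Tendsto (fun u : ℝ => u * log (1 - exp (-2 * u))) (𝓝[>] 0) (𝓝 0) := by
      have := (log_log_lim.comp cy).const_mul (-1/2)
      rw [mul_zero] at this
      refine this.congr fun u => ?_
      simp only [Function.comp, sub_sub_cancel, log_exp]
      ring
    have t3 : Tendsto (fun u : ℝ => u ^ 2 / 2) (𝓝[>] 0) (𝓝 0) := by
      have : Continuous fun u : ℝ => u ^ 2 / 2 := by fun_prop
      simpa using (this.tendsto 0).mono_left nhdsWithin_le_nhds
    have := t1.sub ((t3.add t2).sub ((dilogL_lim1.comp ce).div_const 2))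
    rw [show 0 - (0 + 0 - π ^ 2 / 6 / 2) = π ^ 2 / 12 by ring] at this
    exact this

lemma G_half : dilogG (1/2) = π ^ 2 / 20 := by
  obtain ⟨a, ha, ha2⟩ : ∃ a : ℝ, 0 < a ∧ a ^ 2 = 1 - a := by
    have h5 : √5 ^ 2 = 5 := sq_sqrt (by norm_num)
    have : 1 < √5 := by rw [lt_sqrt] <;> norm_num
    exact ⟨(√5 - 1) / 2, by linarith, by nlinarith⟩
  have h1 : a < 1 := by nlinarith
  have hs : sinh (-log a) = 1/2 := by
    rw [sinh_eq, neg_neg, exp_neg, exp_log ha]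
    field_simp
    linarith
  have he : exp (-2 * -log a) = a ^ 2 := by
    rw [show -2 * -log a = log a + log a by ring, exp_add, exp_log ha, sq]
  have := G_formula (-log a) ⟨by linarith [log_neg ha h1], by
    rw [← arsinh_sinh (-log a), hs, arsinh_lt_arsinh]; norm_num⟩
  rw [hs, he, dilogL_golden a ha ha2, show 1 - a ^ 2 = a by linarith] at this
  linarith

lemma gamma_term (n : ℕ) :
    Real.Gamma (2 * (n : ℝ) + 1/2) / Real.Gamma ((n : ℝ) + 3/2) / (n.factorial : ℝ) * (1/64 : ℝ)^n
      = 2 / (2 * n + 1) * dilogB (2 * n) / 16 ^ n := by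
  induction n with
  | zero =>
    have : Real.Gamma (3/2) = 1/2 * Real.Gamma (1/2) := by
      rw [← Real.Gamma_add_one (by norm_num)]; norm_num
    have h := Real.Gamma_pos_of_pos (s := 1/2) (by norm_num)
    simp only [Nat.cast_zero, mul_zero, zero_add, dilogB_zero, this]
    field_simp
    simp
  | succ n ih =>
    have g1 : Real.Gamma (2 * ((n + 1 : ℕ) : ℝ) + 1/2) =
        (2 * n + 3/2) * ((2 * n + 1/2) * Real.Gamma (2 * (n : ℝ) + 1/2)) := by
      rw [← Real.Gamma_add_one (by positivity), show 2 * (n : ℝ) + 3/2 = 2 * n + 1/2 + 1 by ring,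
        ← Real.Gamma_add_one (by positivity)]
      push_cast; ring_nf
    have g2 : Real.Gamma (((n + 1 : ℕ) : ℝ) + 3/2) = (n + 3/2) * Real.Gamma ((n : ℝ) + 3/2) := by
      rw [← Real.Gamma_add_one (by positivity)]
      push_cast; ring_nf
    have h2 := Real.Gamma_pos_of_pos (s := (n : ℝ) + 3/2) (by positivity)
    have b : dilogB (2 * (n + 1)) = (4 * n + 3) * (4 * n + 1) / (8 * (n + 1) * (2 * n + 1)) * dilogB (2 * n) := by
      rw [show 2 * (n + 1) = 2 * n + 1 + 1 by ring, dilogB_succ, dilogB_succ]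
      push_cast
      field_simp
      ring
    rw [g1, g2, b, Nat.factorial_succ, pow_succ, pow_succ]
    have hf : (0:ℝ) < n.factorial := by positivity
    calc _ = (Real.Gamma (2 * (n : ℝ) + 1/2) / Real.Gamma ((n : ℝ) + 3/2) / (n.factorial : ℝ) * (1/64 : ℝ)^n) * ((2 * n + 3/2) * (2 * n + 1/2) / ((n + 3/2) * (n + 1) * 64)) := by
            push_cast; field_simp
      _ = _ := by
            rw [ih]; push_cast; field_simp; ring

end aux

theorem pi_sq_div_ten_single_sum :
    π^2 / 10
      = (1/16) * ∑' n : ℕ,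
          (4 * (n : ℝ) * (4 * n * (12 * n + 29) + 81) + 71) /
            ((4 * (n : ℝ) + 1)^2 * (4 * (n : ℝ) + 3)^2 * (n.factorial : ℝ)) *
          (Real.Gamma (2 * (n : ℝ) + 1/2) / Real.Gamma ((n : ℝ) + 3/2)) *
          (1/64 : ℝ)^n := by
  set t : ℕ → ℝ := fun m =>
    dilogB m / (((2 * m : ℕ) : ℝ) + 1) * (1/2) ^ (2 * m + 1) / (((2 * m : ℕ) : ℝ) + 1) with ht
  have hG : ∑' m, t m = π ^ 2 / 20 := G_half
  have hs : Summable t := by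
    have : Summable fun n : ℕ => (1/2 : ℝ) ^ n := summable_geometric_of_lt_one (by norm_num) (by norm_num)
    refine Summable.of_norm_bounded this fun n => ?_
    have h1 : (1:ℝ) ≤ ((2 * n : ℕ) : ℝ) + 1 := by
      have : (0:ℝ) ≤ ((2 * n : ℕ) : ℝ) := by positivity
      linarith
    simp only [ht]
    rw [norm_div, norm_mul, norm_div, norm_eq_abs, norm_eq_abs, norm_eq_abs,
      abs_of_pos (a := ((2 * n : ℕ) : ℝ) + 1) (by linarith), abs_of_pos (a := (1/2 : ℝ) ^ (2 * n + 1)) (by positivity)]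
    refine (div_le_self (by positivity) h1).trans ?_
    calc _ ≤ 1 * (1/2 : ℝ) ^ n := by
            refine mul_le_mul ?_ ?_ (by positivity) zero_le_one
            · exact (div_le_self (abs_nonneg _) h1).trans (dilogB_abs n)
            · exact pow_le_pow_of_le_one (by norm_num) (by norm_num) (by omega)
      _ = _ := one_mul _
  have inj0 : Function.Injective fun k : ℕ => 2 * k := fun a b h => by simpa using h
  have inj1 : Function.Injective fun k : ℕ => 2 * k + 1 := fun a b h => by simpa using h
  have s0 := hs.comp_injective inj0
  have s1 := hs.comp_injective inj1
  have h := tsum_even_add_odd s0 s1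
  have h2 := s0.tsum_add s1
  simp only [Function.comp] at h2
  rw [hG, ← h2] at h
  have : π ^ 2 / 10 = (1/16) * (32 * (π ^ 2 / 20)) := by ring
  rw [this, ← h, ← tsum_mul_left]
  congr 1
  refine tsum_congr fun n => ?_
  have g := gamma_term n
  have hf : (0:ℝ) < n.factorial := by positivity
  have : ∀ P D x y : ℝ, P / (D * n.factorial) * x * y = P / D * (x / n.factorial * y) := by
    intro P D x y
    rw [← div_div]; ring
  rw [this, g]
  simp only [ht]
  rw [dilogB_succ]
  have p : ((1:ℝ)/2) ^ (2 * (2 * n) + 1) = 1 / 2 / 16 ^ n := by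
    rw [show 2 * (2 * n) + 1 = 4 * n + 1 by ring, pow_succ, pow_mul, show ((1:ℝ)/2) ^ 4 = 1 / 16 by norm_num, one_div_pow]
    ring
  have p2 : ((1:ℝ)/2) ^ (2 * (2 * n + 1) + 1) = 1 / 8 / 16 ^ n := by
    rw [show 2 * (2 * n + 1) + 1 = 4 * n + 3 by ring, pow_add, pow_mul, show ((1:ℝ)/2) ^ 4 = 1 / 16 by norm_num, one_div_pow]
    ring
  rw [p, p2]
  push_cast
  have q1 : (2 * (2 * (n:ℝ)) + 1) = 4 * n + 1 := by ring
  have q2 : (2 * (2 * (n:ℝ) + 1) + 1) = 4 * n + 3 := by ring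
  rw [q1, q2]
  field_simp
  ring
end
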